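/- If Q is a random-free graph class, then for every ε > 0 there exists N such that for all n ≥ N, |Q_n| ≤ 2^{ε·n²}, where |Q_n| is the number of labelled graphs on {1,…,n} in Q. -/

import Mathlib

open MeasureTheory Set Filter

noncomputable section

/-- A graphon: a symmetric measurable function `ℝ → ℝ → ℝ` with values in `[0,1]`
(only its values on `[0,1]²` matter). -/
def IsGraphon (W : ℝ → ℝ → ℝ) : Prop :=
  (∀ x y, W x y = W y x) ∧ Measurable (Function.uncurry W) ∧
    ∀ x y, W x y ∈ Set.Icc (0 : ℝ) 1

/-- The cut norm `‖U‖_□`, the supremum over measurable `S, T ⊆ [0,1]` of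
`|∫_{S×T} U|`. -/
def cutNorm (U : ℝ → ℝ → ℝ) : ℝ :=
  sSup { r : ℝ | ∃ S T : Set ℝ, MeasurableSet S ∧ MeasurableSet T ∧
    S ⊆ Set.Icc 0 1 ∧ T ⊆ Set.Icc 0 1 ∧
    r = |∫ p in S ×ˢ T, U p.1 p.2| }

/-- `d_□(W₁, W₂) = ‖W₁ - W₂‖_□`. -/
def dCut (W₁ W₂ : ℝ → ℝ → ℝ) : ℝ := cutNorm (fun x y => W₁ x y - W₂ x y)

/-- A Lebesgue-measure-preserving map `[0,1] → [0,1]`. -/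
def IsMPSelf (σ : ℝ → ℝ) : Prop :=
  MeasureTheory.MeasurePreserving σ
      (MeasureTheory.volume.restrict (Set.Icc (0:ℝ) 1))
      (MeasureTheory.volume.restrict (Set.Icc (0:ℝ) 1)) ∧
    Set.MapsTo σ (Set.Icc (0:ℝ) 1) (Set.Icc (0:ℝ) 1)

/-- The cut distance `δ_□(W₁, W₂)`. -/
def deltaCut (W₁ W₂ : ℝ → ℝ → ℝ) : ℝ :=
  sInf { r : ℝ | ∃ σ₁ σ₂ : ℝ → ℝ, IsMPSelf σ₁ ∧ IsMPSelf σ₂ ∧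
    r = cutNorm (fun x y => W₁ (σ₁ x) (σ₁ y) - W₂ (σ₂ x) (σ₂ y)) }

/-- The binary entropy function `h` (base-2 logarithm; `logb 2 0 = 0` by convention,
so `h 0 = h 1 = 0`). -/
def binEnt (x : ℝ) : ℝ := -x * Real.logb 2 x - (1 - x) * Real.logb 2 (1 - x)

/-- `h̃ x = h (min x (1/2))`. -/
def htilde (x : ℝ) : ℝ := binEnt (min x (1/2))

/-- The entropy `Ent(W) = ∫₀¹∫₀¹ h(W(x,y)) dx dy` of a graphon. -/
def graphonEnt (W : ℝ → ℝ → ℝ) : ℝ :=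
  ∫ x in Set.Icc (0:ℝ) 1, ∫ y in Set.Icc (0:ℝ) 1, binEnt (W x y)

open Classical in
/-- The graphon `W_G` of a simple graph `G` on `{1, …, n}` (vertices as `Fin n`,
vertex `i : Fin n` representing `i+1`): `W_G x y = 1` iff `⌈nx⌉⌈ny⌉ ∈ E(G)`. -/
def graphonOfGraph {n : ℕ} (G : SimpleGraph (Fin n)) : ℝ → ℝ → ℝ := fun x y =>
  if ∃ i j : Fin n, G.Adj i j ∧ ⌈(n : ℝ) * x⌉ = ((i : ℕ) : ℤ) + 1 ∧
      ⌈(n : ℝ) * y⌉ = ((j : ℕ) : ℤ) + 1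
  then 1 else 0

/-- A labelled graph class: a set of graphs on `{1,…,n}` for each `n`. -/
abbrev GraphClass := ∀ n : ℕ, Set (SimpleGraph (Fin n))

/-- A graph class is closed under relabelling by permutations. -/
def IsGraphClass (Q : GraphClass) : Prop :=
  ∀ (n : ℕ) (π : Equiv.Perm (Fin n)) (G : SimpleGraph (Fin n)),
    G ∈ Q n → G.comap ⇑π ∈ Q n

/-- A hereditary graph class: a graph class closed under taking induced subgraphs
(relabelled by the order-preserving bijection). -/
def IsHereditary (Q : GraphClass) : Prop :=
  IsGraphClass Q ∧
    ∀ (m n : ℕ) (f : Fin m → Fin n), StrictMono f →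
      ∀ G ∈ Q n, G.comap f ∈ Q m

/-- `Q̂`: the set of graphons which are limits (in cut distance) of sequences of graphs in
the class `Q` whose orders tend to infinity. -/
def limitSet (Q : GraphClass) : Set (ℝ → ℝ → ℝ) :=
  { W | IsGraphon W ∧
    ∃ (nk : ℕ → ℕ) (Gk : ∀ k, SimpleGraph (Fin (nk k))),
      (∀ k, Gk k ∈ Q (nk k)) ∧ Filter.Tendsto nk Filter.atTop Filter.atTop ∧
      Filter.Tendsto (fun k => deltaCut (graphonOfGraph (Gk k)) W) Filter.atTop (nhds 0) }

/-- `C(n,2) = n(n-1)/2` as a real number. -/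
def choose2 (n : ℕ) : ℝ := (n : ℝ) * ((n : ℝ) - 1) / 2

open Classical in
/-- The step function `E[W | P]` obtained by averaging `W` over the products of the
parts of the partition `P` of `[0,1]`. -/
def condExpPart {k : ℕ} (P : Fin k → Set ℝ) (W : ℝ → ℝ → ℝ) : ℝ → ℝ → ℝ := fun x y =>
  ∑ i : Fin k, ∑ j : Fin k,
    if x ∈ P i ∧ y ∈ P j then ⨍ p in (P i) ×ˢ (P j), W p.1 p.2 else 0

/-- `W̄_n`: the step function of `W` for the partition of `[0,1]` into `n` consecutive
intervals of length `1/n`. -/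
def barStep (n : ℕ) (W : ℝ → ℝ → ℝ) : ℝ → ℝ → ℝ :=
  condExpPart (fun i : Fin n => Set.Ioc (((i : ℕ) : ℝ)/n) ((((i : ℕ) : ℝ) + 1)/n)) W

/-- `N̂_□(n, δ; W)`: the number of graphs `G` on `{1,…,n}` with `d_□(W_G, W) ≤ δ`. -/
def NhatCut (n : ℕ) (δ : ℝ) (W : ℝ → ℝ → ℝ) : ℕ :=
  Nat.card {G : SimpleGraph (Fin n) // dCut (graphonOfGraph G) W ≤ δ}

/-- `N_□(n, δ; W)`: the number of graphs `G` on `{1,…,n}` with `δ_□(W_G, W) ≤ δ`. -/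
def NCut (n : ℕ) (δ : ℝ) (W : ℝ → ℝ → ℝ) : ℕ :=
  Nat.card {G : SimpleGraph (Fin n) // deltaCut (graphonOfGraph G) W ≤ δ}

open Classical in
/-- The induced density `p(F; W)` of a graph `F` on `{1,…,k}` in a graphon `W`. -/
def inducedDensity {k : ℕ} (F : SimpleGraph (Fin k)) (W : ℝ → ℝ → ℝ) : ℝ :=
  ∫ x : Fin k → ℝ in Set.univ.pi (fun _ : Fin k => Set.Icc (0:ℝ) 1),
    ∏ i : Fin k, ∏ j : Fin k,
      if i < j then (if F.Adj i j then W (x i) (x j) else 1 - W (x i) (x j)) else 1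

open Classical in
/-- The randomness support graphon `1_{rand(W)}` of `W`. -/
def randIndicator (W : ℝ → ℝ → ℝ) : ℝ → ℝ → ℝ := fun x y =>
  if 0 < W x y ∧ W x y < 1 then 1 else 0

/-- A kernel `U` is `K_r`-free if `∏_{i<j} U(x_i, x_j) = 0` for a.e. `x ∈ [0,1]^r`. -/
def KFree (r : ℕ) (U : ℝ → ℝ → ℝ) : Prop :=
  ∀ᵐ x ∂(MeasureTheory.volume.restrict (Set.univ.pi fun _ : Fin r => Set.Icc (0:ℝ) 1)),
    (∏ i : Fin r, ∏ j : Fin r, if i < j then U (x i) (x j) else 1) = 0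

open Classical in
/-- The graphon `W^{(r,s)}`: equal to `1/2` off the diagonal blocks, `1` on the first `s`
diagonal blocks `I_i × I_i`, and `0` on the remaining diagonal blocks. -/
def Wrs (r s : ℕ) : ℝ → ℝ → ℝ := fun x y =>
  if ∃ i j : Fin r, i ≠ j ∧ x ∈ Set.Ioc (((i:ℕ):ℝ)/r) ((((i:ℕ):ℝ)+1)/r) ∧
      y ∈ Set.Ioc (((j:ℕ):ℝ)/r) ((((j:ℕ):ℝ)+1)/r)
  then 1/2
  else if ∃ i : Fin r, (i:ℕ) < s ∧ x ∈ Set.Ioc (((i:ℕ):ℝ)/r) ((((i:ℕ):ℝ)+1)/r) ∧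
      y ∈ Set.Ioc (((i:ℕ):ℝ)/r) ((((i:ℕ):ℝ)+1)/r)
  then 1 else 0

/-- `E_r = ⋃_{i ≠ j} I_i × I_j` where `I_i`, `i = 1, …, r`, are the consecutive
intervals of length `1/r` in `[0,1]`. -/
def Er (r : ℕ) : Set (ℝ × ℝ) :=
  ⋃ (i : Fin r) (j : Fin r) (_ : i ≠ j),
    (Set.Ioc (((i:ℕ):ℝ)/r) ((((i:ℕ):ℝ)+1)/r)) ×ˢ (Set.Ioc (((j:ℕ):ℝ)/r) ((((j:ℕ):ℝ)+1)/r))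

/-- `R_r`: the set of graphons equal to `1/2` on `E_r` and `{0,1}`-valued elsewhere
on `[0,1]²`. -/
def Rset (r : ℕ) : Set (ℝ → ℝ → ℝ) :=
  { W | IsGraphon W ∧ (∀ p ∈ Er r, W p.1 p.2 = 1/2) ∧
      ∀ p ∈ ((Set.Icc (0:ℝ) 1) ×ˢ (Set.Icc (0:ℝ) 1)) \ Er r,
        W p.1 p.2 = 0 ∨ W p.1 p.2 = 1 }

/-- A graphon is random-free if it is `{0,1}`-valued a.e. on `[0,1]²`. -/
def IsRandomFree (W : ℝ → ℝ → ℝ) : Prop :=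
  ∀ᵐ p ∂(MeasureTheory.volume.restrict ((Set.Icc (0:ℝ) 1) ×ˢ (Set.Icc (0:ℝ) 1))),
    W (Prod.fst p) (Prod.snd p) = 0 ∨ W (Prod.fst p) (Prod.snd p) = 1

/-!
Relabel every graph so that, for each `l`, its adjacency matrix is within `1 / (l + 1)` in cut norm
of a step matrix on consecutive intervals of vertices, with the number of intervals and the
finitely many admissible step matrices depending on `l` only. Weak regularity gives such partitions,
and a single lexicographic sorting makes the parts of all of them intervals at once. Relabelling
costs a factor `n! = 2 ^ o(n²)`.

If more than `2 ^ (ε n²)` relabelled graphs of order `n` remained for infinitely many `n`, then, as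
an `L¹` ball of small radius contains few graphs of a given order, some sequence of them would be
`L¹`-separated. Along an ultrafilter their graphons converge weakly to a graphon `W`. By Helly
selection the interval partitions converge too, so the convergence to `W` holds in cut distance, and
`W` is random-free. But `0 ≤ W_k ≤ 1`, so weak convergence to a `{0, 1}`-valued function is `L¹`
convergence, contradicting the separation.
-/

section WeakRegularity

/-- `MatrixCutNormLE R c` says that the cut norm of the real matrix `R` (unnormalised: the largest
absolute value of the sum of the entries of a submatrix) is at most `c`. -/
def MatrixCutNormLE {V : Type*} (R : V × V → ℝ) (c : ℝ) : Prop :=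
  ∀ S T : Finset V, |∑ p ∈ S ×ˢ T, R p| ≤ c

theorem sum_sq_sub_sign_mul_indicator_le {ι : Type*} [Fintype ι] [DecidableEq ι] (a : ι → ℝ)
    (P : Finset ι) (ε : ℝ) :
    ∑ i, (a i - ε * ((SignType.sign (∑ j ∈ P, a j) : ℝ) * if i ∈ P then 1 else 0)) ^ 2 ≤
      ∑ i, a i ^ 2 - 2 * ε * |∑ j ∈ P, a j| + ε ^ 2 * Fintype.card ι := by
  set s : ℝ := (SignType.sign (∑ j ∈ P, a j) : ℝ) with hs
  have hs_sq : s ^ 2 ≤ 1 := by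
    rcases SignType.trichotomy (SignType.sign (∑ j ∈ P, a j)) with h | h | h <;> simp [hs, h]
  have hcard : ∑ i, (if i ∈ P then (1 : ℝ) else 0) = P.card := by simp
  calc ∑ i, (a i - ε * (s * if i ∈ P then 1 else 0)) ^ 2
      = ∑ i, (a i ^ 2 - 2 * ε * s * (if i ∈ P then a i else 0)
          + ε ^ 2 * s ^ 2 * if i ∈ P then 1 else 0) := by
        refine Finset.sum_congr rfl fun i _ => ?_
        split_ifs <;> ring
    _ = ∑ i, a i ^ 2 - 2 * ε * (s * ∑ j ∈ P, a j) + ε ^ 2 * (s ^ 2 * P.card) := by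
        rw [Finset.sum_add_distrib, Finset.sum_sub_distrib, ← Finset.mul_sum, ← Finset.mul_sum,
          Finset.sum_ite_mem, Finset.univ_inter, hcard]
        ring
    _ ≤ ∑ i, a i ^ 2 - 2 * ε * |∑ j ∈ P, a j| + ε ^ 2 * Fintype.card ι := by
        rw [hs, sign_mul_self]
        gcongr
        calc s ^ 2 * P.card ≤ 1 * Fintype.card ι := by
              gcongr
              exact P.card_le_univ
          _ = Fintype.card ι := one_mul _

/-- A signed sum of `J` cut matrices, scaled by `ε`, on the common refinement of the cuts: a row
index records which of the row sets, and which of the column sets, contain the vertex. -/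
def cutKernel {J : ℕ} (ε : ℝ) (σ : Fin J → SignType) (a b : Fin J → Bool × Bool) : ℝ :=
  ε * ∑ i, (σ i : ℝ) * if (a i).1 ∧ (b i).2 then 1 else 0

theorem exists_cutKernel_of_sum_sq_le {V : Type*} [Fintype V] {ε : ℝ} (hε : 0 < ε) (J : ℕ) :
    ∀ A : V × V → ℝ, ∑ p, A p ^ 2 ≤ J * (ε * Fintype.card V) ^ 2 →
      ∃ (σ : Fin J → SignType) (φ : V → Fin J → Bool × Bool),
        MatrixCutNormLE (fun p => A p - cutKernel ε σ (φ p.1) (φ p.2))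
          (ε * Fintype.card V ^ 2) := by
  classical
  induction J with
  | zero =>
    intro A hA
    have hA0 : ∀ p, A p = 0 := by
      intro p
      rw [Nat.cast_zero, zero_mul] at hA
      have hp := (Finset.single_le_sum (fun q _ => sq_nonneg (A q)) (Finset.mem_univ p)).trans hA
      exact pow_eq_zero_iff two_ne_zero |>.1 (le_antisymm hp (sq_nonneg _))
    refine ⟨Fin.elim0, fun _ => Fin.elim0, fun S T => ?_⟩
    simp only [hA0, cutKernel, Finset.univ_eq_empty, Finset.sum_empty, mul_zero, sub_zero,
      Finset.sum_const_zero, abs_zero]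
    positivity
  | succ J ih =>
    intro A hA
    by_cases hgood : MatrixCutNormLE A (ε * Fintype.card V ^ 2)
    · exact ⟨0, fun _ _ => default, by simpa [cutKernel] using hgood⟩
    obtain ⟨S, T, hST⟩ : ∃ S T : Finset V, ε * Fintype.card V ^ 2 < |∑ p ∈ S ×ˢ T, A p| := by
      simpa [MatrixCutNormLE] using hgood
    set s := SignType.sign (∑ p ∈ S ×ˢ T, A p)
    obtain ⟨σ, φ, hφ⟩ := ih (fun p => A p - ε * ((s : ℝ) * if p ∈ S ×ˢ T then 1 else 0)) <| by
      have henergy := sum_sq_sub_sign_mul_indicator_le A (S ×ˢ T) ε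
      rw [Fintype.card_prod] at henergy
      push_cast at hA henergy
      nlinarith
    refine ⟨Fin.cons s σ, fun v => Fin.cons (decide (v ∈ S), decide (v ∈ T)) (φ v), ?_⟩
    convert hφ using 2 with p
    simp only [cutKernel, Fin.sum_univ_succ, Fin.cons_zero, Fin.cons_succ, decide_eq_true_eq,
      Finset.mem_product]
    ring

theorem exists_finite_weakRegularity {ε : ℝ} (hε : 0 < ε) :
    ∃ (K : ℕ) (𝓑 : Set (Fin K × Fin K → ℝ)), 𝓑.Finite ∧
      ∀ {V : Type*} [Fintype V] (A : V × V → ℝ), (∀ p, |A p| ≤ 1) →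
        ∃ φ : V → Fin K, ∃ B ∈ 𝓑,
          MatrixCutNormLE (fun p => A p - B (φ p.1, φ p.2)) (ε * Fintype.card V ^ 2) := by
  set J := ⌈1 / ε ^ 2⌉₊
  let e := Fintype.equivFin (Fin J → Bool × Bool)
  refine ⟨_, range fun σ p => cutKernel ε σ (e.symm p.1) (e.symm p.2), finite_range _,
    fun {V} _ A hA => ?_⟩
  obtain ⟨σ, φ, hφ⟩ := exists_cutKernel_of_sum_sq_le hε J A <| by
    have hJ : 1 ≤ J * ε ^ 2 := (div_le_iff₀ (by positivity)).1 (Nat.le_ceil (1 / ε ^ 2))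
    calc ∑ p, A p ^ 2 ≤ ∑ _p : V × V, (1 : ℝ) :=
          Finset.sum_le_sum fun p _ => (sq_le_one_iff_abs_le_one _).2 (hA p)
      _ = 1 * (Fintype.card V : ℝ) ^ 2 := by simp [sq]
      _ ≤ J * ε ^ 2 * (Fintype.card V : ℝ) ^ 2 := by gcongr
      _ = J * (ε * Fintype.card V) ^ 2 := by ring
  exact ⟨e ∘ φ, _, mem_range_self σ, by simpa using hφ⟩

end WeakRegularity

section SortedRegularity

theorem MatrixCutNormLE.comp_injective {V W : Type*} {R : V × V → ℝ} {c : ℝ}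
    (h : MatrixCutNormLE R c) {f : W → V} (hf : Function.Injective f) :
    MatrixCutNormLE (fun p => R (f p.1, f p.2)) c := by
  intro S T
  let i : W ↪ V := ⟨f, hf⟩
  have hmap : S.map i ×ˢ T.map i = (S ×ˢ T).map (i.prodMap i) :=
    (Finset.prodMap_map_product i i S T).symm
  have hST := h (S.map i) (T.map i)
  rwa [hmap, Finset.sum_map] at hST

theorem toLex_subtype_Iic_le {ι : Type*} [LinearOrder ι] {α : ι → Type*}
    [∀ i, PartialOrder (α i)] (l : ι) {x y : ∀ i, α i} (h : toLex x ≤ toLex y) :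
    toLex (fun i : Iic l => x i) ≤ toLex fun i : Iic l => y i := by
  rcases h.eq_or_lt with hxy | ⟨i, heq, hlt⟩
  · rw [toLex.injective hxy]
  rcases le_or_gt i l with hil | hli
  · exact le_of_lt ⟨⟨i, hil⟩, fun j hj => heq j hj, hlt⟩
  · refine le_of_eq (congrArg toLex (funext fun j => heq j ?_))
    exact lt_of_le_of_lt j.2 hli

open Classical in
/-- The adjacency matrix of a graph, as a function on ordered pairs of vertices. -/
def adjIndicator {V : Type*} (G : SimpleGraph V) (p : V × V) : ℝ := if G.Adj p.1 p.2 then 1 else 0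

theorem adjIndicator_comap {V W : Type*} (G : SimpleGraph V) (f : W → V) (p : W × W) :
    adjIndicator (G.comap f) p = adjIndicator G (f p.1, f p.2) := rfl

theorem adjIndicator_mem_Icc {V : Type*} (G : SimpleGraph V) (p : V × V) :
    adjIndicator G p ∈ Icc (0 : ℝ) 1 := by
  unfold adjIndicator
  split_ifs <;> simp

/-- The graph `G` on `Fin n` is within normalised cut norm `ε` of a step function that has
consecutive intervals of vertices as its steps and a member of `𝓑` as its matrix of values. -/
def HasIntervalStepApprox {K n : ℕ} (𝓑 : Set (Fin K × Fin K → ℝ)) (ε : ℝ)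
    (G : SimpleGraph (Fin n)) : Prop :=
  ∃ x : Fin n → Fin K, Monotone x ∧ ∃ B ∈ 𝓑,
    MatrixCutNormLE (fun p => adjIndicator G p - B (x p.1, x p.2)) (ε * n ^ 2)

/- Sorting the vertices lexicographically by the sequence of their parts makes the parts of every
level intervals at once, after refining level `l` by the levels before it. -/
theorem exists_perm_forall_hasIntervalStepApprox {ε : ℕ → ℝ} (hε : ∀ l, 0 < ε l) :
    ∃ (K : ℕ → ℕ) (𝓑 : ∀ l, Set (Fin (K l) × Fin (K l) → ℝ)), (∀ l, (𝓑 l).Finite) ∧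
      ∀ {n : ℕ} (G : SimpleGraph (Fin n)), ∃ π : Equiv.Perm (Fin n),
        ∀ l, HasIntervalStepApprox (𝓑 l) (ε l) (G.comap π) := by
  choose K₀ 𝓑₀ hfin hreg using fun l => exists_finite_weakRegularity (hε l)
  have (l : ℕ) : Fintype (Lex (∀ i : Iic l, Fin (K₀ i))) := Fintype.ofFinite _
  let e (l : ℕ) := Fintype.orderIsoFinOfCardEq (Lex (∀ i : Iic l, Fin (K₀ i))) rfl
  let part (l : ℕ) (a : Fin (Fintype.card (Lex (∀ i : Iic l, Fin (K₀ i))))) : Fin (K₀ l) :=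
    ofLex (e l a) ⟨l, self_mem_Iic⟩
  refine ⟨_, fun l => (fun B p => B (part l p.1, part l p.2)) '' 𝓑₀ l,
    fun l => (hfin l).image _, fun {n} G => ?_⟩
  choose φ B hB hφ using fun l => hreg l (adjIndicator G) fun p =>
    abs_le.2 ⟨by linarith [(adjIndicator_mem_Icc G p).1], (adjIndicator_mem_Icc G p).2⟩
  let key (v : Fin n) : Lex (∀ l, Fin (K₀ l)) := toLex fun l => φ l v
  have hsort : Monotone (key ∘ Tuple.sort key) := Tuple.monotone_sort key
  refine ⟨Tuple.sort key, fun l => ⟨fun v => (e l).symm (toLex fun i => φ i (Tuple.sort key v)),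
    fun u v huv => (e l).symm.monotone (toLex_subtype_Iic_le l (hsort huv)), _,
    mem_image_of_mem _ (hB l), ?_⟩⟩
  simpa [part, adjIndicator_comap] using (hφ l).comp_injective (Tuple.sort key).injective

end SortedRegularity

section CutNorm

/-- `CutNormLE μ f c` says that the cut norm of `f` with respect to `μ` is at most `c`. -/
def CutNormLE {α : Type*} [MeasurableSpace α] (μ : Measure α) (f : α × α → ℝ) (c : ℝ) : Prop :=
  ∀ S T : Set α, MeasurableSet S → MeasurableSet T → |∫ p in S ×ˢ T, f p ∂μ.prod μ| ≤ c

theorem exists_sum_mul_le_mul_sum {V : Type*} [Fintype V] {m : ℝ} {w : V → ℝ}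
    (hw : ∀ v, w v ∈ Icc 0 m) (x : V → ℝ) :
    ∃ S : Finset V, ∑ v, w v * x v ≤ m * ∑ v ∈ S, x v := by
  refine ⟨({v | 0 ≤ x v} : Finset V), ?_⟩
  rw [Finset.sum_filter, Finset.mul_sum]
  refine Finset.sum_le_sum fun v _ => ?_
  split_ifs with hx
  · exact mul_le_mul_of_nonneg_right (hw v).2 hx
  · rw [mul_zero]
    exact mul_nonpos_of_nonneg_of_nonpos (hw v).1 (not_le.1 hx).le

namespace MatrixCutNormLE

variable {V : Type*} {R : V × V → ℝ} {c : ℝ}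

theorem neg (h : MatrixCutNormLE R c) : MatrixCutNormLE (fun p => -R p) c := fun S T => by
  simpa only [Finset.sum_neg_distrib, abs_neg] using h S T

theorem sum_mul_mul_le [Fintype V] (h : MatrixCutNormLE R c) {m : ℝ} (hm : 0 ≤ m) {a b : V → ℝ}
    (ha : ∀ v, a v ∈ Icc 0 m) (hb : ∀ v, b v ∈ Icc 0 m) :
    ∑ p : V × V, a p.1 * b p.2 * R p ≤ m ^ 2 * c := by
  obtain ⟨S, hS⟩ := exists_sum_mul_le_mul_sum ha fun u => ∑ v, b v * R (u, v)
  obtain ⟨T, hT⟩ := exists_sum_mul_le_mul_sum hb fun v => ∑ u ∈ S, R (u, v)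
  calc ∑ p : V × V, a p.1 * b p.2 * R p
      = ∑ u, a u * ∑ v, b v * R (u, v) := by
        simp only [Fintype.sum_prod_type, Finset.mul_sum, mul_assoc]
    _ ≤ m * ∑ u ∈ S, ∑ v, b v * R (u, v) := hS
    _ = m * ∑ v, b v * ∑ u ∈ S, R (u, v) := by
        rw [Finset.sum_comm]
        simp only [Finset.mul_sum]
    _ ≤ m * (m * ∑ v ∈ T, ∑ u ∈ S, R (u, v)) := by gcongr
    _ = m ^ 2 * ∑ p ∈ S ×ˢ T, R p := by
        rw [← Finset.sum_product_right']
        ring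
    _ ≤ m ^ 2 * c := by
        gcongr
        exact (le_abs_self _).trans (h S T)

theorem abs_sum_mul_mul_le [Fintype V] (h : MatrixCutNormLE R c) {m : ℝ} (hm : 0 ≤ m)
    {a b : V → ℝ} (ha : ∀ v, a v ∈ Icc 0 m) (hb : ∀ v, b v ∈ Icc 0 m) :
    |∑ p : V × V, a p.1 * b p.2 * R p| ≤ m ^ 2 * c := by
  refine abs_le'.2 ⟨h.sum_mul_mul_le hm ha hb, ?_⟩
  simpa only [mul_neg, Finset.sum_neg_distrib] using h.neg.sum_mul_mul_le hm ha hb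

end MatrixCutNormLE

variable {α : Type*} [MeasurableSpace α] {μ : Measure α}

theorem setIntegral_prod_comp_eq_sum [IsFiniteMeasure μ] {V : Type*} [Fintype V]
    [MeasurableSpace V] [MeasurableSingletonClass V] {φ : α → V} (hφ : Measurable φ)
    (R : V × V → ℝ) (S T : Set α) :
    ∫ p in S ×ˢ T, R (φ p.1, φ p.2) ∂μ.prod μ =
      ∑ q : V × V, (μ.restrict S).real (φ ⁻¹' {q.1}) * (μ.restrict T).real (φ ⁻¹' {q.2}) * R q := by
  rw [← Measure.prod_restrict]
  calc ∫ p, R (φ p.1, φ p.2) ∂(μ.restrict S).prod (μ.restrict T)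
      = ∫ q, R q ∂((μ.restrict S).map φ).prod ((μ.restrict T).map φ) := by
        rw [Measure.map_prod_map _ _ hφ hφ, integral_map (hφ.prodMap hφ).aemeasurable
          (measurable_of_finite R).aestronglyMeasurable]
        rfl
    _ = _ := by
        rw [integral_fintype .of_finite]
        refine Finset.sum_congr rfl fun q _ => ?_
        rw [← Set.singleton_prod_singleton (a := q.1) (b := q.2), measureReal_prod_prod,
          map_measureReal_apply hφ (measurableSet_singleton _),
          map_measureReal_apply hφ (measurableSet_singleton _), smul_eq_mul]

theorem MatrixCutNormLE.cutNormLE_comp [IsFiniteMeasure μ] {V : Type*} [Finite V]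
    [MeasurableSpace V] [MeasurableSingletonClass V] {R : V × V → ℝ} {c m : ℝ}
    (h : MatrixCutNormLE R c) (hm : 0 ≤ m) {φ : α → V} (hφ : Measurable φ)
    (hφm : ∀ v, μ.real (φ ⁻¹' {v}) ≤ m) :
    CutNormLE μ (fun p => R (φ p.1, φ p.2)) (m ^ 2 * c) := by
  intro S T _ _
  have := Fintype.ofFinite V
  have hweight (S : Set α) (v : V) : (μ.restrict S).real (φ ⁻¹' {v}) ∈ Icc 0 m :=
    ⟨measureReal_nonneg,
      (ENNReal.toReal_mono (measure_ne_top _ _) (Measure.restrict_le_self _)).trans (hφm v)⟩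
  rw [setIntegral_prod_comp_eq_sum hφ]
  exact h.abs_sum_mul_mul_le hm (hweight S) (hweight T)

namespace CutNormLE

variable {f g : α × α → ℝ} {c d : ℝ}

theorem mono (h : CutNormLE μ f c) (hcd : c ≤ d) : CutNormLE μ f d :=
  fun S T hS hT => (h S T hS hT).trans hcd

theorem congr_ae (h : CutNormLE μ f c) (hfg : f =ᵐ[μ.prod μ] g) : CutNormLE μ g c := by
  intro S T hS hT
  rw [← setIntegral_congr_ae₀ (hS.prod hT).nullMeasurableSet (hfg.mono fun _ hp _ => hp)]
  exact h S T hS hT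

theorem add (hf : CutNormLE μ f c) (hg : CutNormLE μ g d) (hfi : Integrable f (μ.prod μ))
    (hgi : Integrable g (μ.prod μ)) : CutNormLE μ (fun p => f p + g p) (c + d) := by
  intro S T hS hT
  rw [integral_add hfi.restrict hgi.restrict]
  exact (abs_add_le _ _).trans (add_le_add (hf S T hS hT) (hg S T hS hT))

theorem neg (hf : CutNormLE μ f c) : CutNormLE μ (fun p => -f p) c := fun S T hS hT => by
  simpa only [integral_neg, abs_neg] using hf S T hS hT

end CutNormLE

theorem cutNormLE_comp_sub_comp [IsProbabilityMeasure μ] {β : Type*} {φ ψ : α → β}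
    {B : β × β → ℝ} {M : ℝ} (hB : ∀ q, |B q| ≤ M) :
    CutNormLE μ (fun p => B (φ p.1, φ p.2) - B (ψ p.1, ψ p.2))
      (4 * M * μ.real {x | φ x ≠ ψ x}) := by
  intro S T hS hT
  set D := {x | φ x ≠ ψ x}
  set E : Set (α × α) := D ×ˢ univ ∪ univ ×ˢ D
  have hEle : (μ.prod μ).real E ≤ 2 * μ.real D := by
    calc (μ.prod μ).real E ≤ (μ.prod μ).real (D ×ˢ univ) + (μ.prod μ).real (univ ×ˢ D) :=
          measureReal_union_le _ _
      _ = 2 * μ.real D := by simp only [measureReal_prod_prod, probReal_univ]; ring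
  have hbound (p : α × α) : ‖B (φ p.1, φ p.2) - B (ψ p.1, ψ p.2)‖ ≤ 2 * M :=
    (norm_sub_le_of_le (hB _) (hB _)).trans_eq (two_mul M).symm
  have hzero : ∀ p ∈ S ×ˢ T \ (S ×ˢ T ∩ E), B (φ p.1, φ p.2) - B (ψ p.1, ψ p.2) = 0 := by
    rintro p ⟨hpST, hpE⟩
    have hpE : φ p.1 = ψ p.1 ∧ φ p.2 = ψ p.2 := by simpa [hpST, E, D] using hpE
    rw [hpE.1, hpE.2, sub_self]
  rw [setIntegral_eq_of_subset_of_forall_sdiff_eq_zero (hS.prod hT) inter_subset_left hzero,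
    ← Real.norm_eq_abs]
  calc _ ≤ 2 * M * (μ.prod μ).real (S ×ˢ T ∩ E) :=
        norm_setIntegral_le_of_norm_le_const (measure_lt_top _ _) fun p _ => hbound p
    _ ≤ 2 * M * (2 * μ.real D) := by
        have hM : 0 ≤ M :=
          let ⟨x⟩ := nonempty_of_isProbabilityMeasure μ
          (abs_nonneg _).trans (hB (φ x, φ x))
        gcongr
        exact (measureReal_mono inter_subset_right).trans hEle
    _ = 4 * M * μ.real D := by ring

end CutNorm

section WeakConvergence

open scoped Topology

theorem exists_forall_tendsto_inner_of_norm_le {ι E : Type*} [NormedAddCommGroup E]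
    [InnerProductSpace ℝ E] [CompleteSpace E] (U : Ultrafilter ι) {x : ι → E} {r : ℝ}
    (hx : ∀ k, ‖x k‖ ≤ r) :
    ∃ y : E, ∀ z, Tendsto (fun k => inner ℝ (x k) z) U (𝓝 (inner ℝ y z)) := by
  let D := InnerProductSpace.toDual ℝ E
  let L (k : ι) : WeakDual ℝ E := StrongDual.toWeakDual (D (x k))
  have hL : ∀ k, L k ∈ WeakDual.toStrongDual ⁻¹' Metric.closedBall (0 : StrongDual ℝ E) r :=
    fun k => by
      rw [mem_preimage, mem_closedBall_zero_iff]
      exact (LinearIsometryEquiv.norm_map D (x k)).trans_le (hx k)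
  obtain ⟨Λ, -, hΛ⟩ := (WeakDual.isCompact_closedBall (𝕜 := ℝ) (E := E) 0 r).ultrafilter_le_nhds
    (U.map L) (le_principal_iff.2 (Filter.mem_map.2 (Eventually.of_forall hL)))
  refine ⟨D.symm (WeakDual.toStrongDual Λ), fun z => ?_⟩
  rw [InnerProductSpace.toDual_symm_apply]
  exact ((WeakDual.eval_continuous z).tendsto Λ).comp hΛ

variable {ι Ω : Type*} [MeasurableSpace Ω]

/-- Weak convergence of `f k` to `g` along `l`, tested against indicators of measurable sets. -/
def TendstoSetIntegral (μ : Measure Ω) (f : ι → Ω → ℝ) (l : Filter ι) (g : Ω → ℝ) : Prop :=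
  ∀ s, MeasurableSet s → Tendsto (fun k => ∫ x in s, f k x ∂μ) l (𝓝 (∫ x in s, g x ∂μ))

variable {μ : Measure Ω} {f : ι → Ω → ℝ} {g : Ω → ℝ}

theorem integrable_of_forall_mem_Icc [IsFiniteMeasure μ] (hg : Measurable g)
    (hg01 : ∀ x, g x ∈ Icc (0 : ℝ) 1) : Integrable g μ :=
  .of_mem_Icc 0 1 hg.aemeasurable (Eventually.of_forall hg01)

theorem exists_integrable_tendstoSetIntegral [IsFiniteMeasure μ] (U : Ultrafilter ι)
    (hf : ∀ k, Measurable (f k)) {C : ℝ} (hC0 : 0 ≤ C) (hC : ∀ k x, ‖f k x‖ ≤ C) :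
    ∃ g, Measurable g ∧ Integrable g μ ∧ TendstoSetIntegral μ f U g := by
  have hmem (k : ι) : MemLp (f k) 2 μ :=
    .of_bound (hf k).aestronglyMeasurable C (Eventually.of_forall (hC k))
  have hset (F : Lp ℝ 2 μ) {s : Set Ω} (hs : MeasurableSet s) :
      inner ℝ F (indicatorConstLp 2 hs (measure_ne_top μ s) (1 : ℝ)) = ∫ x in s, F x ∂μ := by
    rw [real_inner_comm, L2.inner_indicatorConstLp_one]
  obtain ⟨G, hG⟩ := exists_forall_tendsto_inner_of_norm_le U (x := fun k => (hmem k).toLp) (r := _)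
    fun k => Lp.norm_le_of_ae_bound hC0 <| by
      filter_upwards [(hmem k).coeFn_toLp] with x hx
      rw [hx]
      exact hC k x
  refine ⟨G, (Lp.stronglyMeasurable G).measurable, (Lp.memLp G).integrable one_le_two,
    fun s hs => ?_⟩
  have hGs := hG (indicatorConstLp 2 hs (measure_ne_top μ s) 1)
  rw [hset G hs] at hGs
  refine hGs.congr fun k => ?_
  rw [hset _ hs]
  exact integral_congr_ae (ae_restrict_of_ae (hmem k).coeFn_toLp)

namespace TendstoSetIntegral

variable {l : Filter ι}

theorem congr_ae (h : TendstoSetIntegral μ f l g) {g' : Ω → ℝ} (hg : g =ᵐ[μ] g') :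
    TendstoSetIntegral μ f l g' := fun s hs => by
  rw [← integral_congr_ae (ae_restrict_of_ae hg)]
  exact h s hs

theorem ae_mem_Icc [IsFiniteMeasure μ] [l.NeBot] (h : TendstoSetIntegral μ f l g)
    (hf : ∀ k, Integrable (f k) μ) (hg : Integrable g μ) {a b : ℝ} (hfab : ∀ k x, f k x ∈ Icc a b) :
    ∀ᵐ x ∂μ, g x ∈ Icc a b := by
  have hga : (fun _ => a) ≤ᵐ[μ] g :=
    ae_le_of_forall_setIntegral_le (integrable_const a) hg fun s hs _ =>
      ge_of_tendsto' (h s hs) fun k =>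
        integral_mono (integrable_const a) (hf k).restrict fun x => (hfab k x).1
  have hgb : g ≤ᵐ[μ] fun _ => b :=
    ae_le_of_forall_setIntegral_le hg (integrable_const b) fun s hs _ =>
      le_of_tendsto' (h s hs) fun k =>
        integral_mono (hf k).restrict (integrable_const b) fun x => (hfab k x).2
  filter_upwards [hga, hgb] with x hxa hxb using ⟨hxa, hxb⟩

/- Where the limit is `0` or `1`, an extreme value of the range `[0, 1]`, the difference `f k - g`
has constant sign, so its `L¹` norm is read off two set integrals. -/
theorem tendsto_integral_abs_sub [IsFiniteMeasure μ] (h : TendstoSetIntegral μ f l g)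
    (hf : ∀ k, Measurable (f k)) (hg : Measurable g) (hf01 : ∀ k x, f k x ∈ Icc (0 : ℝ) 1)
    (hg01 : ∀ᵐ x ∂μ, g x = 0 ∨ g x = 1) :
    Tendsto (fun k => ∫ x, |f k x - g x| ∂μ) l (𝓝 0) := by
  have hfi (k : ι) : Integrable (f k) μ := integrable_of_forall_mem_Icc (hf k) (hf01 k)
  have hgi : Integrable g μ := .of_mem_Icc 0 1 hg.aemeasurable <| by
    filter_upwards [hg01] with x hx
    rcases hx with hx | hx <;> simp [hx]
  let s := g ⁻¹' {1}
  have hs : MeasurableSet s := hg (measurableSet_singleton 1)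
  have hsplit (k : ι) : ∫ x, |f k x - g x| ∂μ =
      (∫ x in s, g x ∂μ - ∫ x in s, f k x ∂μ) + (∫ x in sᶜ, f k x ∂μ - ∫ x in sᶜ, g x ∂μ) := by
    rw [← integral_add_compl (f := fun x => |f k x - g x|) hs ((hfi k).sub hgi).abs,
      ← integral_sub hgi.restrict (hfi k).restrict, ← integral_sub (hfi k).restrict hgi.restrict]
    congr 1
    · refine setIntegral_congr_fun hs fun x (hx : g x = 1) => ?_
      simp only [hx, abs_sub_comm (f k x) 1]
      exact abs_of_nonneg (sub_nonneg.2 (hf01 k x).2)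
    · refine integral_congr_ae ?_
      filter_upwards [ae_restrict_of_ae hg01, ae_restrict_mem hs.compl] with x hx hxs
      simp only [hx.resolve_right hxs, sub_zero]
      exact abs_of_nonneg (hf01 k x).1
  have hlim := ((h s hs).const_sub (∫ x in s, g x ∂μ)).add
    ((h sᶜ hs.compl).sub_const (∫ x in sᶜ, g x ∂μ))
  simp only [sub_self, add_zero] at hlim
  exact hlim.congr fun k => (hsplit k).symm

end TendstoSetIntegral

theorem exists_mem_Icc_tendstoSetIntegral [IsFiniteMeasure μ] (U : Ultrafilter ι)
    (hf : ∀ k, Measurable (f k)) (hf01 : ∀ k x, f k x ∈ Icc (0 : ℝ) 1) :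
    ∃ g, Measurable g ∧ (∀ x, g x ∈ Icc (0 : ℝ) 1) ∧ TendstoSetIntegral μ f U g := by
  obtain ⟨g, hg, hgi, hlim⟩ := exists_integrable_tendstoSetIntegral (μ := μ) U hf zero_le_one
    fun k x => by
      rw [Real.norm_eq_abs, abs_of_nonneg (hf01 k x).1]
      exact (hf01 k x).2
  have hg01 := hlim.ae_mem_Icc (fun k => integrable_of_forall_mem_Icc (hf k) (hf01 k)) hgi hf01
  refine ⟨fun x => projIcc (0 : ℝ) 1 zero_le_one (g x),
    (continuous_subtype_val.comp continuous_projIcc).measurable.comp hg, fun x => Subtype.prop _,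
    hlim.congr_ae ?_⟩
  filter_upwards [hg01] with x hx
  rw [projIcc_of_mem _ hx]

end WeakConvergence

section SymmetricWeakLimit

variable {ι α : Type*} [MeasurableSpace α] {μ : Measure α} [IsFiniteMeasure μ]

theorem setIntegral_preimage_swap (h : α × α → ℝ) (s : Set (α × α)) :
    ∫ p in Prod.swap ⁻¹' s, h p ∂μ.prod μ = ∫ p in s, h p.swap ∂μ.prod μ :=
  Measure.measurePreserving_swap.setIntegral_preimage_emb
    (MeasurableEquiv.prodComm (α := α) (β := α)).measurableEmbedding (fun p => h p.swap) s

theorem exists_symm_tendstoSetIntegral (U : Ultrafilter ι) {f : ι → α × α → ℝ}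
    (hf : ∀ k, Measurable (f k)) (hf01 : ∀ k p, f k p ∈ Icc (0 : ℝ) 1)
    (hfs : ∀ k p, f k p.swap = f k p) :
    ∃ g, Measurable g ∧ (∀ p, g p ∈ Icc (0 : ℝ) 1) ∧ (∀ p, g p.swap = g p) ∧
      TendstoSetIntegral (μ.prod μ) f U g := by
  obtain ⟨g, hg, hg01, hlim⟩ := exists_mem_Icc_tendstoSetIntegral (μ := μ.prod μ) U hf hf01
  have hgs : Measurable fun p : α × α => g p.swap := hg.comp measurable_swap
  refine ⟨fun p => (g p + g p.swap) / 2, (hg.add hgs).div_const 2, fun p => ?_, fun p => ?_,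
    fun s hs => ?_⟩
  · constructor <;> linarith [(hg01 p).1, (hg01 p).2, (hg01 p.swap).1, (hg01 p.swap).2]
  · simp only [Prod.swap_swap, add_comm]
  · have hgi : Integrable g (μ.prod μ) := integrable_of_forall_mem_Icc hg hg01
    have hgsi : Integrable (fun p : α × α => g p.swap) (μ.prod μ) :=
      integrable_of_forall_mem_Icc hgs fun p => hg01 p.swap
    have hlim' := ((hlim s hs).add (hlim _ (measurable_swap hs))).div_const 2
    simp only [setIntegral_preimage_swap, hfs, add_self_div_two] at hlim'
    rwa [integral_div, integral_add hgi.restrict hgsi.restrict]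

end SymmetricWeakLimit

section CutNormLimit

open scoped Topology

variable {ι α : Type*} [MeasurableSpace α] {μ : Measure α}

theorem TendstoSetIntegral.cutNormLE_sub {f : ι → α × α → ℝ} {g h : α × α → ℝ} {l : Filter ι}
    [l.NeBot] (hfg : TendstoSetIntegral (μ.prod μ) f l g) (hf : ∀ k, Integrable (f k) (μ.prod μ))
    (hg : Integrable g (μ.prod μ)) (hh : Integrable h (μ.prod μ)) {c : ℝ}
    (hc : ∀ᶠ k in l, CutNormLE μ (fun p => f k p - h p) c) :
    CutNormLE μ (fun p => g p - h p) c := by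
  intro S T hS hT
  rw [integral_sub hg.restrict hh.restrict]
  refine le_of_tendsto ((hfg _ (hS.prod hT)).sub_const _).abs ?_
  filter_upwards [hc] with k hk
  rw [← integral_sub (hf k).restrict hh.restrict]
  exact hk S T hS hT

theorem TendstoSetIntegral.eventually_cutNormLE_sub {f : ι → α × α → ℝ} {g h : α × α → ℝ}
    {l : Filter ι} [l.NeBot] (hfg : TendstoSetIntegral (μ.prod μ) f l g)
    (hf : ∀ k, Integrable (f k) (μ.prod μ)) (hg : Integrable g (μ.prod μ))
    (hh : Integrable h (μ.prod μ)) {c : ℝ}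
    (hc : ∀ᶠ k in l, CutNormLE μ (fun p => f k p - h p) c) :
    ∀ᶠ k in l, CutNormLE μ (fun p => f k p - g p) (2 * c) := by
  filter_upwards [hc] with k hk
  have hgh := hfg.cutNormLE_sub hf hg hh hc
  have hsum := hk.add hgh.neg ((hf k).sub hh) (hg.sub hh).neg
  simpa only [neg_sub, sub_add_sub_cancel, two_mul] using hsum

theorem TendstoSetIntegral.eventually_cutNormLE_sub_of_step [IsProbabilityMeasure μ]
    {f : ι → α × α → ℝ} {g : α × α → ℝ} {U : Ultrafilter ι}
    (hfg : TendstoSetIntegral (μ.prod μ) f U g) (hf : ∀ k, Integrable (f k) (μ.prod μ))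
    (hg : Integrable g (μ.prod μ)) {V : Type*} [Finite V] [MeasurableSpace V]
    [MeasurableSingletonClass V] {φ : ι → α → V} {ψ : α → V} (hφ : ∀ k, Measurable (φ k))
    (hψ : Measurable ψ) (hφψ : Tendsto (fun k => μ.real {x | φ k x ≠ ψ x}) U (𝓝 0))
    {𝓑 : Set (V × V → ℝ)} (h𝓑 : 𝓑.Finite) {ε : ℝ} (hε : 0 < ε)
    (happrox : ∀ k, ∃ B ∈ 𝓑, CutNormLE μ (fun p => f k p - B (φ k p.1, φ k p.2)) ε) :
    ∀ᶠ k in U, CutNormLE μ (fun p => f k p - g p) (4 * ε) := by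
  obtain ⟨B, -, hB⟩ : ∃ B ∈ 𝓑, ∀ᶠ k in U,
      CutNormLE μ (fun p => f k p - B (φ k p.1, φ k p.2)) ε :=
    (Ultrafilter.eventually_exists_mem_iff h𝓑).1 (Eventually.of_forall happrox)
  obtain ⟨M, hM⟩ := (finite_range fun q => |B q|).bddAbove
  have hBM (q : V × V) : |B q| ≤ M := hM (mem_range_self q)
  have hBi {χ : α → V} (hχ : Measurable χ) : Integrable (fun p => B (χ p.1, χ p.2)) (μ.prod μ) :=
    .of_bound ((measurable_of_finite B).comp (hχ.prodMap hχ)).aestronglyMeasurable M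
      (Eventually.of_forall fun p => hBM _)
  have hsmall : ∀ᶠ k in U, 4 * M * μ.real {x | φ k x ≠ ψ x} ≤ ε :=
    (hφψ.const_mul (4 * M)).eventually_le_const (by rwa [mul_zero])
  have hstep : ∀ᶠ k in U, CutNormLE μ (fun p => f k p - B (ψ p.1, ψ p.2)) (2 * ε) := by
    filter_upwards [hB, hsmall] with k hBk hk
    have hsum := hBk.add ((cutNormLE_comp_sub_comp hBM).mono hk) ((hf k).sub (hBi (hφ k)))
      ((hBi (hφ k)).sub (hBi hψ))
    simpa only [sub_add_sub_cancel, two_mul] using hsum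
  have := hfg.eventually_cutNormLE_sub hf hg (hBi hψ) hstep
  rwa [show 2 * (2 * ε) = 4 * ε by ring] at this

end CutNormLimit

section UnitInterval

/-- Lebesgue measure on the unit interval. -/
abbrev unitMeasure : Measure ℝ := volume.restrict (Icc 0 1)

instance isProbabilityMeasure_unitMeasure : IsProbabilityMeasure unitMeasure := ⟨by simp⟩

theorem ae_unitMeasure_mem_Ioc : ∀ᵐ x ∂unitMeasure, x ∈ Ioc (0 : ℝ) 1 := by
  rw [unitMeasure, ← restrict_Ioc_eq_restrict_Icc]
  exact ae_restrict_mem measurableSet_Ioc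

/-- The index `i` of the interval `(i / n, (i + 1) / n]` that contains `x ∈ (0, 1]`; the truncations
extend this to a monotone function on the real line. -/
def cell (n : ℕ) [NeZero n] (x : ℝ) : Fin n :=
  ⟨min (⌈n * x⌉₊ - 1) (n - 1), by have := NeZero.pos n; omega⟩

variable {n : ℕ} [NeZero n]

theorem monotone_cell : Monotone (cell n) := fun x y hxy => by
  have hceil : ⌈n * x⌉₊ ≤ ⌈n * y⌉₊ := Nat.ceil_mono (by gcongr)
  exact Fin.mk_le_mk.2 (min_le_min_right _ (Nat.sub_le_sub_right hceil 1))

theorem cell_eq_iff {x : ℝ} (hx : x ∈ Ioc (0 : ℝ) 1) (i : Fin n) :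
    cell n x = i ↔ x ∈ Ioc ((i : ℝ) / n) ((i + 1) / n) := by
  have hn : (0 : ℝ) < n := Nat.cast_pos.2 (NeZero.pos n)
  have hpos : 0 < ⌈n * x⌉₊ := Nat.ceil_pos.2 (mul_pos hn hx.1)
  have hle : ⌈n * x⌉₊ ≤ n := Nat.ceil_le.2 (mul_le_of_le_one_right hn.le hx.2)
  have hceil : cell n x = i ↔ ⌈n * x⌉₊ = i + 1 := by
    simp only [Fin.ext_iff, cell]
    omega
  rw [hceil, Nat.ceil_eq_iff i.1.succ_ne_zero, mem_Ioc, div_lt_iff₀' hn, le_div_iff₀' hn]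
  push_cast
  rfl

theorem unitMeasure_real_cell_preimage (i : Fin n) : unitMeasure.real (cell n ⁻¹' {i}) = 1 / n := by
  have hn : (0 : ℝ) < n := Nat.cast_pos.2 (NeZero.pos n)
  have hi : ((i : ℝ) + 1) / n ≤ 1 := (div_le_one hn).2 (mod_cast i.2)
  have hpre : cell n ⁻¹' {i} ∩ Ioc 0 1 = Ioc ((i : ℝ) / n) ((i + 1) / n) := by
    ext x
    refine ⟨fun hx => (cell_eq_iff hx.2 i).1 hx.1, fun hx => ?_⟩
    have hx01 : x ∈ Ioc (0 : ℝ) 1 := ⟨hx.1.trans_le' (by positivity), hx.2.trans hi⟩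
    exact ⟨(cell_eq_iff hx01 i).2 hx, hx01⟩
  rw [unitMeasure, ← restrict_Ioc_eq_restrict_Icc, Measure.real,
    Measure.restrict_apply' measurableSet_Ioc, hpre, ← Measure.real,
    Real.volume_real_Ioc_of_le (by gcongr; linarith)]
  ring

end UnitInterval

section Helly

open scoped Topology

theorem card_filter_lt_succ_le {α : Type*} [Fintype α] [PartialOrder α] {a : ℕ → α}
    (ha : Monotone a) (N : ℕ) [DecidablePred fun j : Fin N => a j < a (j + 1)] :
    Finset.card {j : Fin N | a j < a (j + 1)} ≤ Fintype.card α := by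
  refine Finset.card_le_card_of_injOn (fun j => a (j + 1)) (by simp) (StrictMonoOn.injOn ?_)
  intro i _ j hj hij
  exact (ha (Nat.succ_le_of_lt hij)).trans_lt (by simpa using hj)

variable {K : ℕ}

theorem unitMeasure_real_ne_le {φ ψ : ℝ → Fin K} (hφ : Monotone φ) (hψ : Monotone ψ) {N : ℕ}
    [NeZero N] (hgrid : ∀ j ≤ N, φ (j / N) = ψ (j / N)) :
    unitMeasure.real {x | φ x ≠ ψ x} ≤ K / N := by
  let B : Finset (Fin N) := {j | φ ((j : ℕ) / N) < φ ((j + 1 : ℕ) / N)}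
  have hB : B.card ≤ K :=
    (card_filter_lt_succ_le (a := fun j : ℕ => φ (j / N)) (fun i j hij => hφ (by gcongr))
      N).trans_eq (Fintype.card_fin K)
  have hsub : {x | φ x ≠ ψ x} ≤ᵐ[unitMeasure] ⋃ j ∈ B, cell N ⁻¹' {j} := by
    filter_upwards [ae_unitMeasure_mem_Ioc] with x hx01 (hne : φ x ≠ ψ x)
    set j := cell N x with hj
    have hx := (cell_eq_iff hx01 j).1 rfl
    suffices hjB : j ∈ B from mem_biUnion hjB hj.symm
    by_contra hjB
    have hconst : φ ((j : ℕ) / N) = φ ((j + 1 : ℕ) / N) :=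
      (hφ (by gcongr; simp)).eq_of_not_lt (by simpa [B] using hjB)
    have hleft := hgrid j j.2.le
    have hright := hgrid (j + 1) j.2
    push_cast at hconst hright
    refine hne (le_antisymm ?_ ?_)
    · calc φ x ≤ φ ((j + 1) / N) := hφ hx.2
        _ = ψ (j / N) := by rw [← hconst, hleft]
        _ ≤ ψ x := hψ hx.1.le
    · calc ψ x ≤ ψ ((j + 1) / N) := hψ hx.2
        _ = φ (j / N) := by rw [← hright, hconst]
        _ ≤ φ x := hφ hx.1.le
  calc unitMeasure.real {x | φ x ≠ ψ x}
      ≤ unitMeasure.real (⋃ j ∈ B, cell N ⁻¹' {j}) :=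
        ENNReal.toReal_mono (measure_ne_top _ _) (measure_mono_ae hsub)
    _ ≤ ∑ j ∈ B, unitMeasure.real (cell N ⁻¹' {j}) := measureReal_biUnion_finset_le _ _
    _ = B.card * (1 / N) := by
        simp only [unitMeasure_real_cell_preimage, Finset.sum_const, nsmul_eq_mul]
    _ ≤ K * (1 / N) := by gcongr
    _ = K / N := mul_one_div _ _

theorem exists_monotone_tendsto_unitMeasure_ne {ι : Type*} (U : Ultrafilter ι)
    {φ : ι → ℝ → Fin K} (hφ : ∀ k, Monotone (φ k)) :
    ∃ ψ : ℝ → Fin K, Monotone ψ ∧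
      Tendsto (fun k => unitMeasure.real {x | φ k x ≠ ψ x}) U (𝓝 0) := by
  have hlim (x : ℝ) : ∃ v, ∀ᶠ k in U, φ k x = v :=
    Ultrafilter.eventually_exists_iff.1 (Eventually.of_forall fun k => ⟨φ k x, rfl⟩)
  choose ψ hψ using hlim
  have hψ_mono : Monotone ψ := fun x y hxy => by
    obtain ⟨k, hkx, hky⟩ := ((hψ x).and (hψ y)).exists
    exact hkx ▸ hky ▸ hφ k hxy
  refine ⟨ψ, hψ_mono, tendsto_order.2 ⟨fun c hc => Eventually.of_forall fun k =>
    hc.trans_le measureReal_nonneg, fun c hc => ?_⟩⟩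
  obtain ⟨N, hN⟩ := exists_nat_gt (K / c)
  have hN0 : (0 : ℝ) < N := (div_nonneg K.cast_nonneg hc.le).trans_lt hN
  have : NeZero N := ⟨(Nat.cast_pos.1 hN0).ne'⟩
  have hgrid : ∀ᶠ k in U, ∀ j ∈ Finset.range (N + 1), φ k (j / N) = ψ (j / N) :=
    (Finset.eventually_all _).2 fun j _ => hψ _
  filter_upwards [hgrid] with k hk
  refine (unitMeasure_real_ne_le (hφ k) hψ_mono fun j hj =>
    hk j (Finset.mem_range_succ_iff.2 hj)).trans_lt ?_
  exact (div_lt_comm₀ hc hN0).1 hN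

end Helly

section CutDistance

open Function (uncurry)

theorem cutNorm_nonneg (U : ℝ → ℝ → ℝ) : 0 ≤ cutNorm U :=
  Real.sSup_nonneg (by rintro _ ⟨S, T, -, -, -, -, rfl⟩; exact abs_nonneg _)

theorem CutNormLE.dCut_le {W₁ W₂ : ℝ → ℝ → ℝ} {c : ℝ}
    (h : CutNormLE unitMeasure (fun p => uncurry W₁ p - uncurry W₂ p) c) (hc : 0 ≤ c) :
    dCut W₁ W₂ ≤ c := by
  refine Real.sSup_le ?_ hc
  rintro _ ⟨S, T, hS, hT, hS01, hT01, rfl⟩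
  have hST := h S T hS hT
  rwa [Measure.prod_restrict, Measure.restrict_restrict (hS.prod hT),
    inter_eq_left.2 (prod_mono hS01 hT01)] at hST

theorem isMPSelf_id : IsMPSelf id := ⟨.id _, mapsTo_id _⟩

theorem deltaCut_nonneg (W₁ W₂ : ℝ → ℝ → ℝ) : 0 ≤ deltaCut W₁ W₂ :=
  Real.sInf_nonneg (by rintro _ ⟨σ₁, σ₂, -, -, rfl⟩; exact cutNorm_nonneg _)

theorem deltaCut_le_dCut (W₁ W₂ : ℝ → ℝ → ℝ) : deltaCut W₁ W₂ ≤ dCut W₁ W₂ :=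
  csInf_le ⟨0, by rintro _ ⟨σ₁, σ₂, -, -, rfl⟩; exact cutNorm_nonneg _⟩
    ⟨id, id, isMPSelf_id, isMPSelf_id, rfl⟩

end CutDistance

section GraphGraphon

open Function (uncurry)

theorem isGraphon_graphonOfGraph {n : ℕ} (G : SimpleGraph (Fin n)) :
    IsGraphon (graphonOfGraph G) := by
  classical
  refine ⟨fun x y => ?_, ?_, fun x y => ?_⟩
  · unfold graphonOfGraph
    congr 1
    refine propext ⟨?_, ?_⟩ <;> exact fun ⟨i, j, hij, hi, hj⟩ => ⟨j, i, hij.symm, hj, hi⟩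
  · let F (q : ℤ × ℤ) : ℝ := if ∃ i j : Fin n, G.Adj i j ∧ q.1 = i + 1 ∧ q.2 = j + 1 then 1 else 0
    exact (Measurable.of_discrete (f := F)).comp
      (by fun_prop : Measurable fun p : ℝ × ℝ => (⌈(n : ℝ) * p.1⌉, ⌈(n : ℝ) * p.2⌉))
  · unfold graphonOfGraph
    split_ifs <;> simp

theorem IsGraphon.integrable {W : ℝ → ℝ → ℝ} (hW : IsGraphon W) :
    Integrable (uncurry W) (unitMeasure.prod unitMeasure) :=
  integrable_of_forall_mem_Icc hW.2.1 fun p => hW.2.2 p.1 p.2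

variable {n : ℕ} [NeZero n]

theorem graphonOfGraph_apply (G : SimpleGraph (Fin n)) {x y : ℝ} (hx : x ∈ Ioc (0 : ℝ) 1)
    (hy : y ∈ Ioc (0 : ℝ) 1) :
    graphonOfGraph G x y = adjIndicator G (cell n x, cell n y) := by
  have hn : (0 : ℝ) < n := Nat.cast_pos.2 (NeZero.pos n)
  have hceil {z : ℝ} (hz : z ∈ Ioc (0 : ℝ) 1) (i : Fin n) :
      ⌈(n : ℝ) * z⌉ = ((i : ℕ) : ℤ) + 1 ↔ cell n z = i := by
    rw [cell_eq_iff hz, Int.ceil_eq_iff, mem_Ioc, div_lt_iff₀' hn, le_div_iff₀' hn]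
    push_cast
    rw [add_sub_cancel_right]
  unfold graphonOfGraph adjIndicator
  congr 1
  refine propext ⟨?_, fun h => ⟨_, _, h, (hceil hx _).2 rfl, (hceil hy _).2 rfl⟩⟩
  rintro ⟨i, j, hij, hi, hj⟩
  rwa [(hceil hx i).1 hi, (hceil hy j).1 hj]

theorem graphonOfGraph_ae_eq (G : SimpleGraph (Fin n)) :
    uncurry (graphonOfGraph G) =ᵐ[unitMeasure.prod unitMeasure]
      fun p => adjIndicator G (cell n p.1, cell n p.2) := by
  filter_upwards [Measure.quasiMeasurePreserving_fst.ae ae_unitMeasure_mem_Ioc,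
    Measure.quasiMeasurePreserving_snd.ae ae_unitMeasure_mem_Ioc] with p hp₁ hp₂
  exact graphonOfGraph_apply G hp₁ hp₂

theorem HasIntervalStepApprox.exists_cutNormLE {K : ℕ} {𝓑 : Set (Fin K × Fin K → ℝ)} {ε : ℝ}
    {G : SimpleGraph (Fin n)} (h : HasIntervalStepApprox 𝓑 ε G) :
    ∃ φ : ℝ → Fin K, Monotone φ ∧ ∃ B ∈ 𝓑,
      CutNormLE unitMeasure (fun p => uncurry (graphonOfGraph G) p - B (φ p.1, φ p.2)) ε := by
  have hn : (n : ℝ) ≠ 0 := NeZero.ne _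
  obtain ⟨x, hx, B, hB, hcut⟩ := h
  refine ⟨x ∘ cell n, hx.comp monotone_cell, B, hB, ?_⟩
  have hcell := hcut.cutNormLE_comp (μ := unitMeasure) (m := 1 / n) (by positivity)
    monotone_cell.measurable fun i => (unitMeasure_real_cell_preimage i).le
  refine (hcell.mono ?_).congr_ae ?_
  · exact le_of_eq (by field_simp)
  · filter_upwards [graphonOfGraph_ae_eq G] with p hp
    rw [hp]
    rfl

end GraphGraphon

section GraphLimits

open scoped Topology
open Function (uncurry)

variable {n : ℕ → ℕ} [∀ k, NeZero (n k)] {G : ∀ k, SimpleGraph (Fin (n k))} {K : ℕ → ℕ}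
  {𝓑 : ∀ l, Set (Fin (K l) × Fin (K l) → ℝ)} {ε : ℕ → ℝ} {W : ℝ → ℝ → ℝ} {U : Ultrafilter ℕ}

theorem eventually_deltaCut_le {K : ℕ} {𝓑 : Set (Fin K × Fin K → ℝ)} (h𝓑 : 𝓑.Finite) {ε : ℝ}
    (hε : 0 < ε) (hG : ∀ k, HasIntervalStepApprox 𝓑 ε (G k)) (hW : IsGraphon W)
    (hlim : TendstoSetIntegral (unitMeasure.prod unitMeasure)
      (fun k => uncurry (graphonOfGraph (G k))) U (uncurry W)) :
    ∀ᶠ k in U, deltaCut (graphonOfGraph (G k)) W ≤ 4 * ε := by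
  choose φ hφ hB using fun k => (hG k).exists_cutNormLE
  obtain ⟨ψ, hψ, hφψ⟩ := exists_monotone_tendsto_unitMeasure_ne U hφ
  filter_upwards [hlim.eventually_cutNormLE_sub_of_step
    (fun k => (isGraphon_graphonOfGraph (G k)).integrable) hW.integrable
    (fun k => (hφ k).measurable) hψ.measurable hφψ h𝓑 hε hB] with k hk
  exact (deltaCut_le_dCut _ _).trans (hk.dCut_le (by positivity))

theorem tendsto_deltaCut_of_forall_hasIntervalStepApprox (h𝓑 : ∀ l, (𝓑 l).Finite)
    (hε : ∀ l, 0 < ε l) (hε0 : Tendsto ε atTop (𝓝 0))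
    (hG : ∀ k l, HasIntervalStepApprox (𝓑 l) (ε l) (G k)) (hW : IsGraphon W)
    (hlim : TendstoSetIntegral (unitMeasure.prod unitMeasure)
      (fun k => uncurry (graphonOfGraph (G k))) U (uncurry W)) :
    Tendsto (fun k => deltaCut (graphonOfGraph (G k)) W) U (𝓝 0) := by
  refine tendsto_order.2 ⟨fun c hc => Eventually.of_forall fun k =>
    hc.trans_le (deltaCut_nonneg _ _), fun c hc => ?_⟩
  have hε4 : ∀ᶠ l in atTop, 4 * ε l < c :=
    (hε0.const_mul 4).eventually_lt_const (by rwa [mul_zero])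
  obtain ⟨l, hl⟩ := hε4.exists
  filter_upwards [eventually_deltaCut_le (h𝓑 l) (hε l) (fun k => hG k l) hW hlim] with k hk
  exact hk.trans_lt hl

theorem exists_isGraphon_tendstoSetIntegral (U : Ultrafilter ℕ) {n : ℕ → ℕ}
    (G : ∀ k, SimpleGraph (Fin (n k))) :
    ∃ W, IsGraphon W ∧ TendstoSetIntegral (unitMeasure.prod unitMeasure)
      (fun k => uncurry (graphonOfGraph (G k))) U (uncurry W) := by
  have hgraphon k := isGraphon_graphonOfGraph (G k)
  obtain ⟨g, hg, hg01, hgs, hlim⟩ := exists_symm_tendstoSetIntegral (μ := unitMeasure) U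
    (fun k => (hgraphon k).2.1) (fun k p => (hgraphon k).2.2 p.1 p.2)
    fun k p => (hgraphon k).1 p.2 p.1
  exact ⟨Function.curry g, ⟨fun x y => hgs (y, x), hg, fun x y => hg01 (x, y)⟩, hlim⟩

theorem mem_limitSet_of_tendsto_hyperfilter {Q : GraphClass} {n : ℕ → ℕ}
    {G : ∀ k, SimpleGraph (Fin (n k))} (hG : ∀ k, G k ∈ Q (n k))
    (hn : Tendsto n atTop atTop) (hW : IsGraphon W)
    (hlim : Tendsto (fun k => deltaCut (graphonOfGraph (G k)) W) (hyperfilter ℕ) (𝓝 0)) :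
    W ∈ limitSet Q := by
  obtain ⟨s, hs, hlim⟩ := (hlim.mapClusterPt.mono Nat.hyperfilter_le_atTop).tendsto_subseq
  exact ⟨hW, n ∘ s, fun k => G (s k), fun k => hG (s k), hn.comp hs.tendsto_atTop, hlim⟩

end GraphLimits

section Counting

open scoped Nat symmDiff
open Function (uncurry)

theorem card_mul_rpow_le_one_add_pow {α : Type*} [Fintype α] {x θ : ℝ} (hx₀ : 0 < x) (hx₁ : x ≤ 1)
    (𝒜 : Finset (Finset α)) (h𝒜 : ∀ D ∈ 𝒜, (D.card : ℝ) ≤ θ * Fintype.card α) :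
    𝒜.card * x ^ (θ * Fintype.card α) ≤ (1 + x) ^ Fintype.card α := by
  calc 𝒜.card * x ^ (θ * Fintype.card α) = ∑ _D ∈ 𝒜, x ^ (θ * Fintype.card α) := by
        rw [Finset.sum_const, nsmul_eq_mul]
    _ ≤ ∑ D ∈ 𝒜, x ^ D.card := Finset.sum_le_sum fun D hD => by
        rw [← Real.rpow_natCast]
        exact Real.rpow_le_rpow_of_exponent_ge hx₀ hx₁ (h𝒜 D hD)
    _ ≤ ∑ D : Finset α, x ^ D.card := Finset.sum_le_univ_sum_of_nonneg fun _ => by positivity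
    _ = (1 + x) ^ Fintype.card α := by
        simpa only [one_pow, mul_one, add_comm] using Fintype.sum_pow_mul_eq_add_pow α x 1

theorem exists_pos_forall_card_le_two_rpow {ε : ℝ} (hε : 0 < ε) :
    ∃ θ : ℝ, 0 < θ ∧ ∀ {α : Type*} [Fintype α] (𝒜 : Finset (Finset α)),
      (∀ D ∈ 𝒜, (D.card : ℝ) ≤ θ * Fintype.card α) →
        (𝒜.card : ℝ) ≤ 2 ^ (ε * Fintype.card α) := by
  obtain ⟨x, hx₀, hx⟩ := exists_between
    (lt_min (sub_pos.2 (Real.one_lt_rpow one_lt_two (half_pos hε))) one_pos)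
  obtain ⟨hxε, hx₁⟩ := lt_min_iff.1 hx
  have hpow : (2 : ℝ) ^ (-(ε / 2)) < 1 :=
    Real.rpow_lt_one_of_one_lt_of_neg one_lt_two (by linarith)
  refine ⟨Real.logb x (2 ^ (-(ε / 2))), Real.logb_pos_of_base_lt_one hx₀ hx₁ (by positivity) hpow,
    fun {α} _ 𝒜 h𝒜 => ?_⟩
  have hcount := card_mul_rpow_le_one_add_pow hx₀ hx₁.le 𝒜 h𝒜
  rw [Real.rpow_mul hx₀.le, Real.rpow_logb hx₀ hx₁.ne (by positivity), ← Real.rpow_mul two_pos.le,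
    neg_mul, Real.rpow_neg two_pos.le, ← div_eq_mul_inv, div_le_iff₀ (by positivity)] at hcount
  calc (𝒜.card : ℝ) ≤ (1 + x) ^ Fintype.card α * 2 ^ (ε / 2 * Fintype.card α) := hcount
    _ ≤ (2 ^ (ε / 2)) ^ Fintype.card α * 2 ^ (ε / 2 * Fintype.card α) := by
        gcongr
        linarith
    _ = 2 ^ (ε * Fintype.card α) := by
        rw [← Real.rpow_mul_natCast two_pos.le, ← Real.rpow_add two_pos]
        ring_nf

theorem tendsto_two_rpow_mul_sq {ε : ℝ} (hε : 0 < ε) :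
    Tendsto (fun n : ℕ => (2 : ℝ) ^ (ε * (n : ℝ) ^ 2)) atTop atTop :=
  (tendsto_rpow_atTop_of_base_gt_one 2 one_lt_two).comp <|
    ((tendsto_pow_atTop two_ne_zero).comp tendsto_natCast_atTop_atTop).const_mul_atTop hε

theorem eventually_factorial_le_two_rpow {ε : ℝ} (hε : 0 < ε) :
    ∀ᶠ n : ℕ in atTop, (n ! : ℝ) ≤ 2 ^ (ε * (n : ℝ) ^ 2) := by
  have hlim := tendsto_pow_const_div_const_pow_of_one_lt 1 (Real.one_lt_rpow one_lt_two hε)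
  filter_upwards [hlim.eventually_lt_const one_pos] with n hn
  rw [pow_one, div_lt_one (by positivity)] at hn
  calc (n ! : ℝ) ≤ (n : ℝ) ^ n := mod_cast Nat.factorial_le_pow n
    _ ≤ (((2 : ℝ) ^ ε) ^ n) ^ n := by gcongr
    _ = 2 ^ (ε * (n : ℝ) ^ 2) := by
        rw [← pow_mul, ← Real.rpow_mul_natCast two_pos.le, Nat.cast_mul, sq]

theorem ncard_le_factorial_mul_ncard {V : Type*} [Fintype V] {S T : Set (SimpleGraph V)}
    (h : ∀ G ∈ S, ∃ π : Equiv.Perm V, G.comap π ∈ T) :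
    S.ncard ≤ (Fintype.card V)! * T.ncard := by
  classical
  choose! π hπ using h
  have hinj : Function.Injective
      fun G : S => (π G, (⟨G.1.comap (π G), hπ G G.2⟩ : T)) := by
    rintro ⟨G, hG⟩ ⟨G', hG'⟩ h
    simp only [Prod.mk.injEq, Subtype.mk.injEq] at h
    obtain ⟨hππ', hcomap⟩ := h
    rw [← hππ'] at hcomap
    simpa [SimpleGraph.comap_comap] using congrArg (SimpleGraph.comap (π G).symm) hcomap
  calc S.ncard = Nat.card S := rfl
    _ ≤ Nat.card (Equiv.Perm V × T) := Nat.card_le_card_of_injective _ hinj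
    _ = (Fintype.card V)! * T.ncard := by
        rw [Nat.card_prod, Nat.card_perm, Nat.card_eq_fintype_card, Nat.card_coe_set_eq]

/-- The `L¹` distance of two kernels on the unit square. -/
def kernelL1Dist (W W' : ℝ → ℝ → ℝ) : ℝ :=
  ∫ p, |uncurry W p - uncurry W' p| ∂unitMeasure.prod unitMeasure

theorem kernelL1Dist_comm (W W' : ℝ → ℝ → ℝ) : kernelL1Dist W W' = kernelL1Dist W' W := by
  simp only [kernelL1Dist, abs_sub_comm]

theorem kernelL1Dist_triangle {W₁ W₂ W₃ : ℝ → ℝ → ℝ} (h₁ : IsGraphon W₁) (h₂ : IsGraphon W₂)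
    (h₃ : IsGraphon W₃) : kernelL1Dist W₁ W₃ ≤ kernelL1Dist W₁ W₂ + kernelL1Dist W₂ W₃ := by
  have h₁₂ := (h₁.integrable.sub h₂.integrable).abs
  have h₂₃ := (h₂.integrable.sub h₃.integrable).abs
  exact (integral_mono (h₁.integrable.sub h₃.integrable).abs (h₁₂.add h₂₃)
    fun p => abs_sub_le _ _ _).trans_eq (integral_add h₁₂ h₂₃)

/-- The ordered pairs of adjacent vertices of a graph, so every edge is counted twice. -/
def adjPairs {V : Type*} [Fintype V] (G : SimpleGraph V) : Finset (V × V) :=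
  open Classical in {q | G.Adj q.1 q.2}

theorem adjPairs_injective {V : Type*} [Fintype V] :
    Function.Injective (adjPairs (V := V)) := by
  intro G G' h
  ext u v
  simpa only [adjPairs, Finset.mem_filter_univ] using Finset.ext_iff.1 h (u, v)

theorem abs_adjIndicator_sub {V : Type*} (G G' : SimpleGraph V) (q : V × V) :
    |adjIndicator G q - adjIndicator G' q| = adjIndicator (G ∆ G') q := by
  by_cases h : G.Adj q.1 q.2 <;> by_cases h' : G'.Adj q.1 q.2 <;>
    simp [adjIndicator, symmDiff, h, h']

theorem sum_adjIndicator {V : Type*} [Fintype V] (G : SimpleGraph V) :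
    ∑ q, adjIndicator G q = (adjPairs G).card := by
  classical
  simp only [adjIndicator, adjPairs, Finset.sum_boole]

theorem kernelL1Dist_graphonOfGraph {n : ℕ} [NeZero n] (G G' : SimpleGraph (Fin n)) :
    kernelL1Dist (graphonOfGraph G) (graphonOfGraph G') =
      (adjPairs (G ∆ G')).card / (n : ℝ) ^ 2 := by
  calc kernelL1Dist (graphonOfGraph G) (graphonOfGraph G')
      = ∫ p in univ ×ˢ univ, adjIndicator (G ∆ G') (cell n p.1, cell n p.2)
          ∂unitMeasure.prod unitMeasure := by
        rw [univ_prod_univ, setIntegral_univ]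
        refine integral_congr_ae ?_
        filter_upwards [graphonOfGraph_ae_eq G, graphonOfGraph_ae_eq G'] with p hp hp'
        rw [hp, hp', abs_adjIndicator_sub]
    _ = ∑ q, 1 / (n : ℝ) * (1 / n) * adjIndicator (G ∆ G') q := by
        simp only [setIntegral_prod_comp_eq_sum monotone_cell.measurable, Measure.restrict_univ,
          unitMeasure_real_cell_preimage]
    _ = (adjPairs (G ∆ G')).card / (n : ℝ) ^ 2 := by
        rw [← Finset.mul_sum, sum_adjIndicator]
        ring

theorem exists_pos_forall_ncard_le_of_kernelL1Dist_le {ε : ℝ} (hε : 0 < ε) :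
    ∃ δ : ℝ, 0 < δ ∧ ∀ {n : ℕ} [NeZero n] {W : ℝ → ℝ → ℝ} (A : Set (SimpleGraph (Fin n))),
      IsGraphon W → (∀ G ∈ A, kernelL1Dist W (graphonOfGraph G) ≤ δ) →
        (A.ncard : ℝ) ≤ 2 ^ (ε * (n : ℝ) ^ 2) := by
  classical
  obtain ⟨θ, hθ, hcard⟩ := exists_pos_forall_card_le_two_rpow hε
  refine ⟨θ / 2, half_pos hθ, fun {n} _ {W} A hW hA => ?_⟩
  obtain rfl | ⟨G₀, hG₀⟩ := A.eq_empty_or_nonempty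
  · rw [ncard_empty, Nat.cast_zero]
    positivity
  have hn : (0 : ℝ) < n := Nat.cast_pos.2 (NeZero.pos n)
  have hinj : Function.Injective fun G => adjPairs (G₀ ∆ G) :=
    adjPairs_injective.comp (symmDiff_right_injective G₀)
  have hdiff : ∀ G ∈ A, ((adjPairs (G₀ ∆ G)).card : ℝ) ≤ θ * (n : ℝ) ^ 2 := fun G hG => by
    rw [← div_le_iff₀ (by positivity), ← kernelL1Dist_graphonOfGraph]
    have htri := kernelL1Dist_triangle (isGraphon_graphonOfGraph G₀) hW (isGraphon_graphonOfGraph G)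
    linarith [kernelL1Dist_comm W (graphonOfGraph G₀), hA G₀ hG₀, hA G hG]
  have himage := hcard (A.toFinset.image fun G => adjPairs (G₀ ∆ G)) (by
    simpa [← sq] using hdiff)
  simpa [Finset.card_image_of_injective _ hinj, ← sq, ncard_eq_toFinset_card'] using himage

theorem exists_seq_forall_lt_kernelL1Dist {R : GraphClass} {ε : ℝ} (hε : 0 < ε)
    (hR : ∃ᶠ n : ℕ in atTop, (2 : ℝ) ^ (ε * (n : ℝ) ^ 2) < (R n).ncard) :
    ∃ δ : ℝ, 0 < δ ∧ ∃ (n : ℕ → ℕ) (G : ∀ k, SimpleGraph (Fin (n k))), StrictMono n ∧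
      (∀ k, n k ≠ 0 ∧ G k ∈ R (n k)) ∧ ∀ j k, j < k →
        δ < kernelL1Dist (graphonOfGraph (G j)) (graphonOfGraph (G k)) := by
  obtain ⟨δ, hδ, hball⟩ := exists_pos_forall_ncard_le_of_kernelL1Dist_le (half_pos hε)
  suffices hstep : ∀ s : Finset (Σ n, SimpleGraph (Fin n)), ∃ y : Σ n, SimpleGraph (Fin n),
      (y.1 ≠ 0 ∧ y.2 ∈ R y.1) ∧ ∀ z ∈ s, z.1 < y.1 ∧
        δ < kernelL1Dist (graphonOfGraph z.2) (graphonOfGraph y.2) by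
    obtain ⟨y, hy, hfar⟩ := exists_seq_of_forall_finset_exists _ _ fun s _ => hstep s
    exact ⟨δ, hδ, fun k => (y k).1, fun k => (y k).2, fun j k hjk => (hfar j k hjk).1, hy,
      fun j k hjk => (hfar j k hjk).2⟩
  intro s
  obtain ⟨n, hn, hn₀, hns, hcard⟩ := (hR.and_eventually
    ((eventually_gt_atTop 0).and (((s.eventually_all).2 fun z _ => eventually_gt_atTop z.1).and
      ((tendsto_two_rpow_mul_sq (half_pos hε)).eventually_ge_atTop (s.card : ℝ))))).exists
  by_contra! hcon
  have : NeZero n := ⟨hn₀.ne'⟩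
  have hcover : R n ⊆ ⋃ z ∈ s,
      {G | kernelL1Dist (graphonOfGraph z.2) (graphonOfGraph G) ≤ δ} := fun G hG => by
    obtain ⟨z, hz, hzG⟩ := hcon ⟨n, G⟩ ⟨hn₀.ne', hG⟩
    exact mem_biUnion hz (hzG (hns z hz))
  refine hn.not_ge ?_
  calc ((R n).ncard : ℝ)
      ≤ ∑ z ∈ s, ({G : SimpleGraph (Fin n) |
          kernelL1Dist (graphonOfGraph z.2) (graphonOfGraph G) ≤ δ}.ncard : ℝ) :=
        mod_cast (ncard_le_ncard hcover).trans (Finset.set_ncard_biUnion_le _ _)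
    _ ≤ s.card * (2 : ℝ) ^ (ε / 2 * (n : ℝ) ^ 2) := by
        rw [← nsmul_eq_mul]
        exact Finset.sum_le_card_nsmul _ _ _ fun z _ =>
          hball _ (isGraphon_graphonOfGraph z.2) fun G hG => hG
    _ ≤ 2 ^ (ε / 2 * (n : ℝ) ^ 2) * 2 ^ (ε / 2 * (n : ℝ) ^ 2) := by gcongr
    _ = 2 ^ (ε * (n : ℝ) ^ 2) := by
        rw [← Real.rpow_add two_pos]
        ring_nf

end Counting

section RandomFree

open scoped Topology

variable {n : ℕ → ℕ} {G : ∀ k, SimpleGraph (Fin (n k))} {W : ℝ → ℝ → ℝ}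

theorem isRandomFree_iff : IsRandomFree W ↔ ∀ᵐ p ∂unitMeasure.prod unitMeasure,
    Function.uncurry W p = 0 ∨ Function.uncurry W p = 1 := by
  rw [Measure.prod_restrict, ← Measure.volume_eq_prod]
  rfl

theorem IsRandomFree.tendsto_kernelL1Dist {U : Ultrafilter ℕ} (hrf : IsRandomFree W)
    (hW : IsGraphon W) (hlim : TendstoSetIntegral (unitMeasure.prod unitMeasure)
      (fun k => Function.uncurry (graphonOfGraph (G k))) U (Function.uncurry W)) :
    Tendsto (fun k => kernelL1Dist (graphonOfGraph (G k)) W) U (𝓝 0) :=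
  hlim.tendsto_integral_abs_sub (fun k => (isGraphon_graphonOfGraph (G k)).2.1) hW.2.1
    (fun k p => (isGraphon_graphonOfGraph (G k)).2.2 p.1 p.2) (isRandomFree_iff.1 hrf)

theorem exists_lt_kernelL1Dist_lt [∀ k, NeZero (n k)] {Q : GraphClass}
    (hrf : ∀ W ∈ limitSet Q, IsRandomFree W) {K : ℕ → ℕ}
    {𝓑 : ∀ l, Set (Fin (K l) × Fin (K l) → ℝ)} {ε : ℕ → ℝ} (h𝓑 : ∀ l, (𝓑 l).Finite)
    (hε : ∀ l, 0 < ε l) (hε₀ : Tendsto ε atTop (𝓝 0)) (hn : Tendsto n atTop atTop)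
    (hG : ∀ k, G k ∈ Q (n k) ∧ ∀ l, HasIntervalStepApprox (𝓑 l) (ε l) (G k)) {δ : ℝ} (hδ : 0 < δ) :
    ∃ j k, j < k ∧ kernelL1Dist (graphonOfGraph (G j)) (graphonOfGraph (G k)) < δ := by
  obtain ⟨W, hW, hlim⟩ := exists_isGraphon_tendstoSetIntegral (hyperfilter ℕ) G
  have hWQ : W ∈ limitSet Q := mem_limitSet_of_tendsto_hyperfilter (fun k => (hG k).1) hn hW
    (tendsto_deltaCut_of_forall_hasIntervalStepApprox h𝓑 hε hε₀ (fun k => (hG k).2) hW hlim)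
  have hclose := ((hrf W hWQ).tendsto_kernelL1Dist hW hlim).eventually_lt_const (half_pos hδ)
  obtain ⟨j, hj⟩ := hclose.exists
  obtain ⟨k, hk, hjk⟩ := (hclose.and (Nat.hyperfilter_le_atTop (eventually_gt_atTop j))).exists
  have htri := kernelL1Dist_triangle (isGraphon_graphonOfGraph (G j)) hW
    (isGraphon_graphonOfGraph (G k))
  exact ⟨j, k, hjk, by linarith [kernelL1Dist_comm W (graphonOfGraph (G k))]⟩

theorem eventually_ncard_hasIntervalStepApprox_le {Q : GraphClass}
    (hrf : ∀ W ∈ limitSet Q, IsRandomFree W) {K : ℕ → ℕ}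
    {𝓑 : ∀ l, Set (Fin (K l) × Fin (K l) → ℝ)} {η : ℕ → ℝ} (h𝓑 : ∀ l, (𝓑 l).Finite)
    (hη : ∀ l, 0 < η l) (hη₀ : Tendsto η atTop (𝓝 0)) {ε : ℝ} (hε : 0 < ε) :
    ∀ᶠ n : ℕ in atTop, ({G ∈ Q n | ∀ l, HasIntervalStepApprox (𝓑 l) (η l) G}.ncard : ℝ) ≤
      2 ^ (ε * (n : ℝ) ^ 2) := by
  by_contra hcon
  simp only [not_eventually, not_le] at hcon
  obtain ⟨δ, hδ, n, G, hn, hG, hfar⟩ := exists_seq_forall_lt_kernelL1Dist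
    (R := fun n => {G ∈ Q n | ∀ l, HasIntervalStepApprox (𝓑 l) (η l) G}) hε hcon
  have : ∀ k, NeZero (n k) := fun k => ⟨(hG k).1⟩
  obtain ⟨j, k, hjk, hclose⟩ :=
    exists_lt_kernelL1Dist_lt hrf h𝓑 hη hη₀ hn.tendsto_atTop (fun k => (hG k).2) hδ
  exact (hfar j k hjk).not_gt hclose

end RandomFree

/-- Corollary 1.3: a random-free graph class contains `2^{o(n²)}`
graphs on `n` vertices. -/
theorem stmt10 (Q : GraphClass) (hQ : IsGraphClass Q)
    (hrf : ∀ W ∈ limitSet Q, IsRandomFree W) :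
    ∀ ε : ℝ, 0 < ε → ∃ N : ℕ, ∀ n ≥ N,
      (Nat.card ↥(Q n) : ℝ) ≤ (2 : ℝ) ^ (ε * (n : ℝ)^2) := by
  intro ε hε
  have hη (l : ℕ) : 0 < 1 / ((l : ℝ) + 1) := Nat.one_div_pos_of_nat
  obtain ⟨K, 𝓑, h𝓑, hsort⟩ := exists_perm_forall_hasIntervalStepApprox hη
  refine eventually_atTop.1 ?_
  filter_upwards [eventually_factorial_le_two_rpow (half_pos hε),
    eventually_ncard_hasIntervalStepApprox_le hrf h𝓑 hη tendsto_one_div_add_atTop_nhds_zero_nat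
      (half_pos hε)] with n hfact hsorted
  have hrelabel := ncard_le_factorial_mul_ncard (S := Q n)
    (T := {G ∈ Q n | ∀ l : ℕ, HasIntervalStepApprox (𝓑 l) (1 / ((l : ℝ) + 1)) G}) fun G hG =>
      (hsort G).imp fun π hπ => ⟨hQ n π G hG, hπ⟩
  rw [Fintype.card_fin] at hrelabel
  calc (Nat.card ↥(Q n) : ℝ)
      ≤ n.factorial *
          {G ∈ Q n | ∀ l, HasIntervalStepApprox (𝓑 l) (1 / ((l : ℝ) + 1)) G}.ncard :=
        mod_cast hrelabel
    _ ≤ 2 ^ (ε / 2 * (n : ℝ) ^ 2) * 2 ^ (ε / 2 * (n : ℝ) ^ 2) := by gcongr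
    _ = 2 ^ (ε * (n : ℝ) ^ 2) := by
        rw [← Real.rpow_add two_pos]
        ring_nf

end
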